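/- arXiv:1507.08540 — 2 statements merged into one kernel-verified Lean document; each statement's English description precedes it below -/
import Mathlib

section
/- (Krasnoselskii fixed point theorem) Let B be a nonempty closed convex subset of a Banach space X, and let A, B' : B → X be maps such that (i) A u + B' v ∈ B for all u, v ∈ B, (ii) A is a contraction (Lipschitz with constant k < 1), and (iii) B' is continuous and B'(B) is relatively compact. Then there exists z ∈ B with z = A z + B' z. -/
namespace Scarf
open Classical Finset

variable {T I L : Type*} [Fintype T] [Fintype I] [LinearOrder L]

def Dom (r : I → T → L) (σ : Finset T) (C : Finset I) : Prop :=
  ∀ t, ∃ i ∈ C, ∀ x ∈ σ, r i t ≤ r i x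

/-- incidence between a room and a door -/
def Inc (R E : Finset T × Finset I) : Prop :=
  (R.2 = E.2 ∧ ∃ x, x ∉ E.1 ∧ R.1 = insert x E.1) ∨
  (R.1 = E.1 ∧ ∃ j, j ∉ R.2 ∧ E.2 = insert j R.2)

def Room (r : I → T → L) (R : Finset T × Finset I) : Prop :=
  Dom r R.1 R.2 ∧ R.1.card = R.2.card

/-- typed doors -/
def Door (r : I → T → L) (c : T → I) (i0 : I) (E : Finset T × Finset I) : Prop :=
  Dom r E.1 E.2 ∧ E.1.card + 1 = E.2.card ∧ E.1.image c = E.2.erase i0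

lemma even_of_pair {α : Type*} (S : Finset α)
    (h : ∀ p ∈ S, ∃ q ∈ S, q ≠ p ∧ ∀ s ∈ S, s = p ∨ s = q) : Even S.card := by
  rcases S.eq_empty_or_nonempty with rfl | ⟨p, hp⟩
  · simp
  · obtain ⟨q, hq, hne, hall⟩ := h p hp
    have : S = {p, q} := by
      ext s
      simp only [mem_insert, mem_singleton]
      constructor
      · exact hall s
      · rintro (rfl | rfl) <;> assumption
    rw [this, card_pair hne.symm]
    exact even_two

lemma Dom.mono {r : I → T → L} {σ τ : Finset T} {C D : Finset I} (h : Dom r σ C)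
    (h1 : τ ⊆ σ) (h2 : C ⊆ D) : Dom r τ D := by
  intro t
  obtain ⟨i, hi, h⟩ := h t
  exact ⟨i, h2 hi, fun x hx => h x (h1 hx)⟩

/-- the minimum map -/
lemma exists_min (r : I → T → L) (σ : Finset T) (h : σ.Nonempty) :
    ∃ m : I → T, (∀ i, m i ∈ σ) ∧ ∀ i, ∀ x ∈ σ, r i (m i) ≤ r i x := by
  choose m hm using fun i => exists_min_image σ (r i) h
  exact ⟨m, fun i => (hm i).1, fun i => (hm i).2⟩

lemma Dom.image_min {r : I → T → L} (hr : ∀ i, Function.Injective (r i)) {σ : Finset T}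
    {C : Finset I} (h : Dom r σ C) {m : I → T} (hm : ∀ i, m i ∈ σ)
    (hm' : ∀ i, ∀ x ∈ σ, r i (m i) ≤ r i x) : C.image m = σ := by
  ext y
  simp only [mem_image]
  constructor
  · rintro ⟨i, -, rfl⟩; exact hm i
  · intro hy
    obtain ⟨i, hi, h⟩ := h y
    exact ⟨i, hi, hr i (le_antisymm (hm' i y hy) (h _ (hm i)))⟩

lemma Dom.card_le {r : I → T → L} (hr : ∀ i, Function.Injective (r i)) {σ : Finset T}
    {C : Finset I} (h : Dom r σ C) : σ.card ≤ C.card := by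
  rcases σ.eq_empty_or_nonempty with rfl | hne
  · simp
  · obtain ⟨m, h1, h2⟩ := exists_min r σ hne
    rw [← h.image_min hr h1 h2]
    exact card_image_le

/-- a door with nonempty first component has exactly two rooms -/
lemma door_even (r : I → T → L) (hr : ∀ i, Function.Injective (r i))
    (τ : Finset T) (D : Finset I) (hne : τ.Nonempty) (hd : Dom r τ D)
    (hc : τ.card + 1 = D.card) :
    Even (univ.filter fun R => Room r R ∧ Inc R (τ, D)).card := by
  obtain ⟨m, h1, h2⟩ := exists_min r τ hne
  have him := hd.image_min hr h1 h2
  -- the collision pair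
  obtain ⟨a, ha, b, hb, hab, hmab⟩ : ∃ a ∈ D, ∃ b ∈ D, a ≠ b ∧ m a = m b :=
    exists_ne_map_eq_of_card_lt_of_maps_to (t := τ) (by omega) (fun i _ => h1 i)
  -- removing an index other than a, b loses surjectivity
  have key : ∀ j ∈ D, (∀ y ∈ τ, ∃ i ∈ D.erase j, m i = y) → j = a ∨ j = b := by
    intro j hj hs
    by_contra! hcon
    have hsub : τ ⊆ ((D.erase j).erase a).image m := by
      intro y hy
      obtain ⟨i, hi, rfl⟩ := hs y hy
      by_cases hia : i = a
      · subst hia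
        exact mem_image.2 ⟨b, by simp [hab.symm, hb, hcon.2.symm], hmab.symm⟩
      · exact mem_image.2 ⟨i, by simp_all, rfl⟩
    have h3 := (card_le_card hsub).trans card_image_le
    rw [card_erase_of_mem (by simp [ha, hcon.1.symm]), card_erase_of_mem hj] at h3
    have := hne.card_pos
    omega
  let M : I → Finset T := fun j => univ.filter fun t => ∀ i ∈ D.erase j, r i (m i) < r i t
  have hMdom : ∀ j ∈ D, ∀ t ∈ M j, r j t ≤ r j (m j) := by
    intro j hj t ht
    obtain ⟨i, hi, h⟩ := hd t
    by_cases hij : i = j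
    · subst hij; exact h _ (h1 i)
    · exact absurd (h _ (h1 i)) (not_le.2 ((mem_filter.1 ht).2 i (by simp [hij, hi])))
  -- room via j
  let P : I → Finset T × Finset I → Prop := fun j R =>
    (M j = ∅ ∧ R = (τ, D.erase j)) ∨
    ∃ x ∈ M j, (∀ t ∈ M j, r j t ≤ r j x) ∧ R = (insert x τ, D)
  have hPex : ∀ j, ∃ R, P j R := by
    intro j
    rcases (M j).eq_empty_or_nonempty with h | h
    · exact ⟨_, Or.inl ⟨h, rfl⟩⟩
    · obtain ⟨x, hx, hx'⟩ := exists_max_image (M j) (r j) h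
      exact ⟨_, Or.inr ⟨x, hx, hx', rfl⟩⟩
  have hPun : ∀ j R R', P j R → P j R' → R = R' := by
    rintro j R R' (⟨h, rfl⟩ | ⟨x, hx, hx', rfl⟩) (⟨h', rfl⟩ | ⟨y, hy, hy', rfl⟩)
    · rfl
    · simp [h] at hy
    · simp [h'] at hx
    · rw [hr j (le_antisymm (hy' x hx) (hx' y hy))]
  have hnotin : ∀ j j', j ∈ D → j' ∈ D → j ≠ j' → m j = m j' → ∀ x ∈ M j, x ∉ τ := by
    intro j j' hj hj' hne' hm x hx hxτ
    have e : x = m j := hr j (le_antisymm (hMdom j hj x hx) (h2 j x hxτ))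
    have := (mem_filter.1 hx).2 j' (by simp [hne'.symm, hj'])
    rw [e, hm] at this
    exact lt_irrefl _ this
  have hProom : ∀ j j', j ∈ D → j' ∈ D → j ≠ j' → m j = m j' → ∀ R, P j R →
      Room r R ∧ Inc R (τ, D) := by
    rintro j j' hj hj' hne' hm R (⟨h, rfl⟩ | ⟨x, hx, hx', rfl⟩)
    · refine ⟨⟨?_, ?_⟩, Or.inr ⟨rfl, j, by simp, by simp [insert_erase hj]⟩⟩
      · intro t
        have ht : t ∉ M j := by simp [h]
        simp only [M, mem_filter, mem_univ, true_and, not_forall, not_lt] at ht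
        obtain ⟨i, hi, hit⟩ := ht
        exact ⟨i, hi, fun x hx => hit.trans (h2 i x hx)⟩
      · simp only [card_erase_of_mem hj]; omega
    · have hxτ := hnotin j j' hj hj' hne' hm x hx
      refine ⟨⟨?_, ?_⟩, Or.inl ⟨rfl, x, hxτ, rfl⟩⟩
      · intro t
        by_cases ht : t ∈ M j
        · refine ⟨j, hj, fun y hy => ?_⟩
          rcases mem_insert.1 hy with rfl | hy
          · exact hx' t ht
          · exact (hMdom j hj t ht).trans (h2 j y hy)
        · simp only [M, mem_filter, mem_univ, true_and, not_forall, not_lt] at ht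
          obtain ⟨i, hi, hit⟩ := ht
          refine ⟨i, mem_of_mem_erase hi, fun y hy => ?_⟩
          rcases mem_insert.1 hy with rfl | hy
          · exact hit.trans ((mem_filter.1 hx).2 i hi).le
          · exact hit.trans (h2 i y hy)
      · simp only [card_insert_of_notMem hxτ]; omega
  have hroomP : ∀ R, Room r R ∧ Inc R (τ, D) → P a R ∨ P b R := by
    rintro ⟨σ, C⟩ ⟨⟨hdom, hcard⟩, (⟨hC, x, hx, hσ⟩ | ⟨hσ, j, hj, hD⟩)⟩
    · simp only at hC hσ hx hdom hcard
      subst hC hσ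
      -- x is the minimum for some j
      obtain ⟨j, hj, hjx⟩ := hdom x
      have hxM : x ∈ M j := by
        refine mem_filter.2 ⟨mem_univ _, fun i hi => ?_⟩
        by_contra! hcon
        obtain ⟨m', h1', h2'⟩ := exists_min r (insert x τ) (insert_nonempty _ _)
        have him' := hdom.image_min hr h1' h2'
        have hinj : Set.InjOn m' C := by
          apply card_image_iff.1; rw [him', hcard]
        have e1 : m' j = x := hr j (le_antisymm (h2' j x (by simp)) (hjx _ (h1' j)))
        have e2 : m' i = x := by
          refine hr i (le_antisymm (h2' i x (by simp)) ?_)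
          rcases mem_insert.1 (h1' i) with h | h
          · rw [h]
          · exact hcon.trans (h2 i _ h)
        exact (ne_of_mem_erase hi) (hinj (mem_of_mem_erase hi) hj (e2.trans e1.symm))
      have hPj : P j (insert x τ, C) := by
        refine Or.inr ⟨x, hxM, fun t ht => ?_, rfl⟩
        obtain ⟨i, hi, hit⟩ := hdom t
        by_cases hij : i = j
        · subst hij; exact hit x (by simp)
        · exact absurd (hit (m i) (by simp [h1])) (not_le.2 ((mem_filter.1 ht).2 i (by simp [hij, hi])))
      rcases key j hj (by
        intro y hy
        obtain ⟨i, hi, hit⟩ := hdom y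
        refine ⟨i, ?_, hr i (le_antisymm (h2 i y hy) (hit _ (by simp [h1])))⟩
        refine mem_erase.2 ⟨?_, hi⟩
        rintro rfl
        have := hr i (le_antisymm (hit x (by simp)) (hjx y (by simp [hy])))
        exact hx (this ▸ hy)) with rfl | rfl
      · exact Or.inl hPj
      · exact Or.inr hPj
    · simp only at hσ hj hD hdom hcard
      subst hσ
      have hCe : C = D.erase j := by rw [hD, erase_insert hj]
      have hPj : P j (σ, C) := by
        refine Or.inl ⟨?_, by rw [hCe]⟩
        ext t
        simp only [notMem_empty, iff_false]
        intro ht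
        obtain ⟨i, hi, hit⟩ := hdom t
        exact absurd (hit (m i) (h1 i)) (not_le.2 ((mem_filter.1 ht).2 i (hCe ▸ hi)))
      rcases key j (by simp [hD]) (by
        intro y hy
        obtain ⟨i, hi, hit⟩ := hdom y
        exact ⟨i, hCe ▸ hi, hr i (le_antisymm (h2 i y hy) (hit _ (h1 i)))⟩) with rfl | rfl
      · exact Or.inl hPj
      · exact Or.inr hPj
  obtain ⟨Ra, hRa⟩ := hPex a
  obtain ⟨Rb, hRb⟩ := hPex b
  have hRab : Ra ≠ Rb := by
    rintro rfl
    have hxa := hnotin a b ha hb hab hmab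
    have hxb := hnotin b a hb ha hab.symm hmab.symm
    rcases hRa with (⟨h, rfl⟩ | ⟨x, hx, hx', rfl⟩) <;>
      rcases hRb with (⟨h', he⟩ | ⟨y, hy, hy', he⟩)
    · have h3 : D.erase a = D.erase b := (Prod.ext_iff.1 he).2
      have : a ∈ D.erase b := by simp [ha, hab]
      rw [← h3] at this
      simp at this
    · have h3 : τ = insert y τ := (Prod.ext_iff.1 he).1
      exact hxb y hy (h3 ▸ mem_insert_self _ _)
    · have h3 : insert x τ = τ := (Prod.ext_iff.1 he).1
      exact hxa x hx (h3 ▸ mem_insert_self _ _)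
    · have h3 : insert x τ = insert y τ := (Prod.ext_iff.1 he).1
      have hxy : x = y := by
        have : x ∈ insert y τ := h3 ▸ mem_insert_self _ _
        rcases mem_insert.1 this with h | h
        · exact h
        · exact absurd h (hxa x hx)
      subst hxy
      have := hMdom a ha x hx
      exact absurd this (not_le.2 ((mem_filter.1 hy).2 a (by simp [ha, hab])))
  have : (univ.filter fun R => Room r R ∧ Inc R (τ, D)) = {Ra, Rb} := by
    ext R
    simp only [mem_filter, mem_univ, true_and, mem_insert, mem_singleton]
    constructor
    · intro h
      rcases hroomP R h with h | h
      · exact Or.inl (hPun _ _ _ h hRa)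
      · exact Or.inr (hPun _ _ _ h hRb)
    · rintro (rfl | rfl)
      · exact hProom a b ha hb hab hmab _ hRa
      · exact hProom b a hb ha hab.symm hmab.symm _ hRb
  rw [this, card_pair hRab]
  exact even_two

/-- the initial door has exactly one room -/
lemma door_empty [Nonempty T] (r : I → T → L) (hr : ∀ i, Function.Injective (r i)) (i0 : I) :
    (univ.filter fun R => Room r R ∧ Inc R ((∅ : Finset T), ({i0} : Finset I))).card = 1 := by
  obtain ⟨x, -, hx⟩ := exists_max_image (univ : Finset T) (r i0) univ_nonempty
  rw [card_eq_one]
  refine ⟨({x}, {i0}), ?_⟩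
  ext ⟨σ, C⟩
  simp only [mem_filter, mem_univ, true_and, mem_singleton]
  constructor
  · rintro ⟨⟨hdom, hcard⟩, (⟨hC, y, hy, hσ⟩ | ⟨hσ, j, hj, hD⟩)⟩
    · simp only at hC hσ hdom
      subst hC hσ
      obtain ⟨i, hi, h⟩ := hdom x
      rw [mem_singleton] at hi
      subst hi
      have := hr i (le_antisymm (h y (by simp)) (hx y (mem_univ _)))
      subst this
      rfl
    · simp only at hσ hcard hdom
      subst hσ
      obtain ⟨i, hi, -⟩ := hdom x
      have : C = ∅ := by simpa using hcard.symm
      simp [this] at hi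
  · rintro h
    obtain ⟨rfl, rfl⟩ := Prod.mk.inj h
    refine ⟨⟨fun t => ⟨i0, by simp, by simpa using hx t (mem_univ _)⟩, by simp⟩,
      Or.inl ⟨rfl, x, by simp, by simp⟩⟩

/-- a non-colorful room has an even number of typed doors -/
lemma room_even (r : I → T → L) (c : T → I) (i0 : I) (σ : Finset T) (C : Finset I)
    (hR : Room r (σ, C)) (hnc : σ.image c ≠ C) :
    Even (univ.filter fun E => Door r c i0 E ∧ Inc (σ, C) E).card := by
  obtain ⟨hdom, hcard⟩ := hR
  simp only at hdom hcard
  -- description of typed doors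
  have hA : ∀ x ∈ σ, (σ.erase x).image c = C.erase i0 → i0 ∈ C →
      Door r c i0 (σ.erase x, C) ∧ Inc (σ, C) (σ.erase x, C) := by
    intro x hx h hi
    refine ⟨⟨hdom.mono (erase_subset _ _) subset_rfl, ?_, h⟩,
      Or.inl ⟨rfl, x, by simp, by simp [insert_erase hx]⟩⟩
    simp only [card_erase_of_mem hx]
    have := card_pos.2 ⟨x, hx⟩
    omega
  have hB : ∀ j ∉ C, σ.image c = (insert j C).erase i0 →
      Door r c i0 (σ, insert j C) ∧ Inc (σ, C) (σ, insert j C) := by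
    intro j hj h
    refine ⟨⟨hdom.mono subset_rfl (subset_insert _ _), ?_, h⟩, Or.inr ⟨rfl, j, hj, rfl⟩⟩
    simp only [card_insert_of_notMem hj]
    omega
  have hform : ∀ E, Door r c i0 E ∧ Inc (σ, C) E →
      (∃ x ∈ σ, (σ.erase x).image c = C.erase i0 ∧ E = (σ.erase x, C)) ∨
      (∃ j ∉ C, σ.image c = (insert j C).erase i0 ∧ E = (σ, insert j C)) := by
    rintro ⟨τ, D⟩ ⟨⟨-, hcd, him⟩, (⟨hC, x, hx, hσ⟩ | ⟨hσ, j, hj, hD⟩)⟩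
    · simp only at hC hσ hx him
      subst hC hσ
      exact Or.inl ⟨x, by simp, by simp [erase_insert hx, him], by simp [erase_insert hx]⟩
    · simp only at hσ hj hD him
      subst hσ hD
      exact Or.inr ⟨j, hj, him, rfl⟩
  have hi0 : ∀ E, Door r c i0 E ∧ Inc (σ, C) E → i0 ∈ C := by
    intro E hE
    by_contra hi
    rcases hform E hE with ⟨x, hx, h, -⟩ | ⟨j, hj, h, -⟩
    · rw [erase_eq_of_notMem hi] at h
      have h3 := card_image_le (s := σ.erase x) (f := c)
      rw [h, card_erase_of_mem hx] at h3
      have := card_pos.2 ⟨x, hx⟩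
      omega
    · by_cases hji : j = i0
      · subst hji
        rw [erase_insert hj] at h
        exact hnc h
      · rw [erase_eq_of_notMem (by simp [hi, Ne.symm hji])] at h
        have h3 := card_image_le (s := σ) (f := c)
        rw [h, card_insert_of_notMem hj] at h3
        omega
  by_cases hi : i0 ∈ C
  swap
  · rw [filter_eq_empty_iff.2 (fun E _ hE => hi (hi0 E hE))]
    simp
  have hCc : (C.erase i0).card + 1 = C.card := card_erase_add_one hi
  -- if σ.erase x maps onto C.erase i0 then injectively
  have hinjA : ∀ x ∈ σ, (σ.erase x).image c = C.erase i0 → Set.InjOn c (σ.erase x) := by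
    intro x hx h
    apply card_image_iff.1
    rw [h]
    have := card_erase_add_one hx
    omega
  have hinjB : ∀ j ∉ C, σ.image c = (insert j C).erase i0 → Set.InjOn c σ := by
    intro j hj h
    apply card_image_iff.1
    rw [h]
    have := card_erase_add_one (mem_insert_of_mem hi : i0 ∈ insert j C)
    rw [card_insert_of_notMem hj] at this
    omega
  -- B-door and corresponding A-door
  have hBcase : ∀ j ∉ C, ∀ x ∈ σ, c x = j → σ.image c = (insert j C).erase i0 →
      (σ.erase x).image c = C.erase i0 ∧
      ∀ E, Door r c i0 E ∧ Inc (σ, C) E → E = (σ.erase x, C) ∨ E = (σ, insert j C) := by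
    intro j hj x hx hcx h
    have hinj := hinjB j hj h
    have hji : j ≠ i0 := fun e => hj (e ▸ hi)
    refine ⟨?_, ?_⟩
    · ext i
      simp only [mem_image, mem_erase]
      constructor
      · rintro ⟨y, ⟨hyx, hy⟩, rfl⟩
        have : c y ∈ (insert j C).erase i0 := h ▸ mem_image_of_mem c hy
        simp only [mem_erase, mem_insert] at this
        refine ⟨this.1, this.2.resolve_left fun e => hyx (hinj hy hx (e.trans hcx.symm))⟩
      · rintro ⟨h3, h4⟩
        have : i ∈ σ.image c := by rw [h]; simp [h3, h4]
        obtain ⟨y, hy, rfl⟩ := mem_image.1 this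
        exact ⟨y, ⟨fun e => hj (by rw [← hcx, ← e]; exact h4), hy⟩, rfl⟩
    · intro E hE
      rcases hform E hE with ⟨y, hy, h', rfl⟩ | ⟨k, hk, h', rfl⟩
      · left
        by_cases hxy : x = y
        · rw [hxy]
        · have : c x ∈ C.erase i0 := h' ▸ mem_image_of_mem c (by simp [hxy, hx])
          exact absurd (hcx ▸ mem_of_mem_erase this) hj
      · right
        have : j ∈ (insert k C).erase i0 := by
          rw [← h', ← hcx]; exact mem_image_of_mem c hx
        simp only [mem_erase, mem_insert, hj, or_false] at this
        rw [this.2]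
  apply even_of_pair
  intro E hE
  simp only [mem_filter, mem_univ, true_and] at hE ⊢
  rcases hform E hE with ⟨x, hx, h, rfl⟩ | ⟨j, hj, h, rfl⟩
  · have himg : σ.image c = insert (c x) (C.erase i0) := by
      rw [← h, ← image_insert, insert_erase hx]
    have hcxi : c x ≠ i0 := by
      intro e
      rw [e, insert_erase hi] at himg
      exact hnc himg
    by_cases hcx : c x ∈ C
    · have : c x ∈ (σ.erase x).image c := by rw [h]; simp [hcx, hcxi]
      obtain ⟨y, hy, hyx⟩ := mem_image.1 this
      have hyx' := ne_of_mem_erase hy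
      have hyσ := mem_of_mem_erase hy
      refine ⟨(σ.erase y, C), hA y hyσ ?_ hi, ?_, ?_⟩
      · rw [← h]
        ext i
        simp only [mem_image, mem_erase]
        constructor
        · rintro ⟨z, ⟨hz, hzσ⟩, rfl⟩
          by_cases hzx : z = x
          · exact ⟨y, ⟨hyx', hyσ⟩, by rw [hzx, hyx]⟩
          · exact ⟨z, ⟨hzx, hzσ⟩, rfl⟩
        · rintro ⟨z, ⟨hz, hzσ⟩, rfl⟩
          by_cases hzy : z = y
          · exact ⟨x, ⟨hyx'.symm, hx⟩, by rw [hzy, hyx]⟩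
          · exact ⟨z, ⟨hzy, hzσ⟩, rfl⟩
      · intro e
        have e1 : σ.erase y = σ.erase x := (Prod.mk.inj e).1
        rw [← e1] at hy
        simp at hy
      · intro E' hE'
        rcases hform E' hE' with ⟨z, hz, h', rfl⟩ | ⟨k, hk, h', rfl⟩
        · by_cases hzx : z = x
          · left; rw [hzx]
          · right
            by_cases hzy : z = y
            · rw [hzy]
            · exfalso
              apply hyx'
              exact hinjA z hz h' (by simp [hyσ, Ne.symm hzy]) (by simp [hx, Ne.symm hzx]) hyx
        · exact absurd (hinjB k hk h' hyσ hx hyx) hyx'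
    · have h' : σ.image c = (insert (c x) C).erase i0 := by
        rw [himg, erase_insert_of_ne hcxi]
      obtain ⟨-, h3⟩ := hBcase _ hcx x hx rfl h'
      refine ⟨_, hB _ hcx h', ?_, h3⟩
      intro e
      have e1 : σ = σ.erase x := (Prod.mk.inj e).1
      rw [e1] at hx
      simp at hx
  · have hji : j ≠ i0 := fun e => hj (e ▸ hi)
    have : j ∈ σ.image c := by rw [h]; simp [hji]
    obtain ⟨x, hx, hcx⟩ := mem_image.1 this
    obtain ⟨h3, h4⟩ := hBcase j hj x hx hcx h
    refine ⟨_, hA x hx h3 hi, ?_, fun E' hE' => (h4 E' hE').symm⟩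
    intro e
    have e1 : σ.erase x = σ := (Prod.mk.inj e).1
    rw [← e1] at hx
    simp at hx

/-- Scarf's lemma. -/
theorem scarf [Nonempty T] [Nonempty I] (r : I → T → L) (hr : ∀ i, Function.Injective (r i))
    (c : T → I) : ∃ (σ : Finset T) (C : Finset I), Dom r σ C ∧ σ.image c = C := by
  obtain ⟨i0⟩ := ‹Nonempty I›
  by_contra! hcon
  have hdc := sum_card_bipartiteAbove_eq_sum_card_bipartiteBelow
    (s := univ.filter fun R : Finset T × Finset I => Room r R)
    (t := univ.filter fun E => Door r c i0 E) Inc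
  have hL : Even (∑ R ∈ univ.filter (fun R : Finset T × Finset I => Room r R),
      (bipartiteAbove Inc (univ.filter fun E => Door r c i0 E) R).card) := by
    apply even_sum
    rintro ⟨σ, C⟩ hR
    rw [bipartiteAbove, filter_filter]
    have hR' := (mem_filter.1 hR).2
    exact room_even r c i0 σ C hR' (hcon σ C hR'.1)
  have h0 : ((∅, {i0}) : Finset T × Finset I) ∈ univ.filter fun E => Door r c i0 E := by
    refine mem_filter.2 ⟨mem_univ _, fun t => ⟨i0, by simp⟩, by simp, by simp⟩
  rw [hdc, ← add_sum_erase _ _ h0] at hL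
  have h1 := door_empty r hr i0
  rw [bipartiteBelow, filter_filter, h1] at hL
  have hE : Even (∑ E ∈ (univ.filter fun E => Door r c i0 E).erase (∅, {i0}),
      (bipartiteBelow Inc (univ.filter fun R : Finset T × Finset I => Room r R) E).card) := by
    apply even_sum
    rintro ⟨τ, D⟩ hE
    obtain ⟨hne, hE⟩ := mem_erase.1 hE
    obtain ⟨hd, hc, him⟩ := (mem_filter.1 hE).2
    rw [bipartiteBelow, filter_filter]
    refine door_even r hr τ D ?_ hd hc
    rw [nonempty_iff_ne_empty]
    rintro rfl
    apply hne
    simp only [card_empty, image_empty, zero_add] at hc him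
    obtain ⟨d, rfl⟩ := card_eq_one.1 hc.symm
    by_cases hdi : d = i0
    · rw [hdi]
    · rw [erase_eq_of_notMem (by simp [Ne.symm hdi])] at him
      simp at him
  rw [Nat.even_add] at hL
  exact absurd (hL.2 hE) (by decide)

end Scarf

namespace KrasAux
open Classical Finset Filter Topology

lemma grid {I : Type*} [Fintype I] [Nonempty I] (N : ℕ) (c : (I → ℕ) → I) :
    ∃ x : I → I → ℕ, (∀ i, ∑ j, x i j = N) ∧
      (∀ i j l, x i l ≤ x j l + Fintype.card I) ∧
      ∀ i, c (x i) = i ∨ x i i ≤ Fintype.card I := by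
  let T := {t : I → Fin (N + 1) // ∑ i, (t i : ℕ) = N}
  have mk : ∀ g : I → ℕ, ∑ i, g i = N → ∃ t : T, ∀ i, (t.1 i : ℕ) = g i := by
    intro g hg
    refine ⟨⟨fun i => ⟨g i, ?_⟩, by simpa using hg⟩, fun i => rfl⟩
    have := single_le_sum (f := g) (fun _ _ => Nat.zero_le _) (mem_univ i)
    omega
  obtain ⟨i0⟩ := ‹Nonempty I›
  haveI : Nonempty I := ⟨i0⟩
  haveI : Nonempty T := by
    obtain ⟨t, -⟩ := mk (Pi.single i0 N) (by simp)
    exact ⟨t⟩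
  let r : I → T → ℕ ×ₗ Fin (Fintype.card T) := fun i t =>
    toLex ((t.1 i : ℕ), Fintype.equivFin T t)
  have hr : ∀ i, Function.Injective (r i) := by
    intro i t t' h
    have h2 : (((t.1 i : ℕ), Fintype.equivFin T t) : ℕ × Fin (Fintype.card T)) =
      ((t'.1 i : ℕ), Fintype.equivFin T t') := toLex.injective h
    exact (Fintype.equivFin T).injective (Prod.mk.inj h2).2
  have hrle : ∀ i t t', r i t ≤ r i t' → (t.1 i : ℕ) ≤ t'.1 i := by
    intro i t t' h
    rcases Prod.Lex.le_iff.1 h with h | h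
    · exact le_of_lt h
    · exact le_of_eq h.1
  obtain ⟨σ, C, hdom, him⟩ := Scarf.scarf r hr (fun t => c fun i => (t.1 i : ℕ))
  have hCne : C.Nonempty := by
    obtain ⟨t⟩ := ‹Nonempty T›
    obtain ⟨i, hi, -⟩ := hdom t
    exact ⟨i, hi⟩
  have hσne : σ.Nonempty := by rw [← him] at hCne; exact image_nonempty.1 hCne
  let m : I → ℕ := fun i => if i ∈ C then σ.inf' hσne (fun t => (t.1 i : ℕ)) else 0
  have hm : ∀ t ∈ σ, ∀ i, m i ≤ t.1 i := by
    intro t ht i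
    simp only [m]
    split_ifs
    · exact inf'_le (fun t : T => (t.1 i : ℕ)) ht
    · exact Nat.zero_le _
  have hsum : N ≤ ∑ i, m i + Fintype.card I := by
    by_contra! hlt
    obtain ⟨i1, hi1⟩ := hCne
    have e : ∑ i, (m i + 1) = ∑ i, m i + Fintype.card I := by
      simp [sum_add_distrib]
    obtain ⟨t, ht⟩ := mk (fun i => (m i + 1) + Pi.single (M := fun _ => ℕ) i1 (N - ∑ i, (m i + 1)) i) (by
      rw [sum_add_distrib]
      simp only [sum_pi_single', mem_univ, if_true]
      omega)
    obtain ⟨i, hi, hit⟩ := hdom t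
    have h3 : (t.1 i : ℕ) ≤ m i := by
      simp only [m, if_pos hi]
      exact le_inf' _ _ fun y hy => hrle i t y (hit y hy)
    rw [ht] at h3
    omega
  have hup : ∀ t ∈ σ, ∀ i, (t.1 i : ℕ) ≤ m i + Fintype.card I := by
    intro t ht i
    have h4 : ∑ j ∈ univ.erase i, m j ≤ ∑ j ∈ univ.erase i, (t.1 j : ℕ) :=
      sum_le_sum fun j _ => hm t ht j
    have h5 := add_sum_erase univ m (mem_univ i)
    have h6 := add_sum_erase univ (fun j => (t.1 j : ℕ)) (mem_univ i)
    have h7 := t.2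
    omega
  have hch : ∀ i, ∃ t ∈ σ, i ∈ C → c (fun j => (t.1 j : ℕ)) = i := by
    intro i
    by_cases hi : i ∈ C
    · rw [← him] at hi
      obtain ⟨t, ht, h⟩ := mem_image.1 hi
      exact ⟨t, ht, fun _ => h⟩
    · obtain ⟨t, ht⟩ := hσne
      exact ⟨t, ht, fun h => absurd h hi⟩
  choose y hy hyc using hch
  refine ⟨fun i j => ((y i).1 j : ℕ), fun i => (y i).2, fun i j l => ?_, fun i => ?_⟩
  · have := hup _ (hy i) l
    have := hm _ (hy j) l
    simp only
    omega
  · by_cases hi : i ∈ C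
    · exact Or.inl (hyc i hi)
    · right
      have := hup _ (hy i) i
      simp only [m, if_neg hi] at this
      simpa using this

theorem brouwer {I : Type*} [Fintype I] [Nonempty I] (f : (I → ℝ) → (I → ℝ))
    (hf : ContinuousOn f (stdSimplex ℝ I)) (hm : Set.MapsTo f (stdSimplex ℝ I) (stdSimplex ℝ I)) :
    ∃ z ∈ stdSimplex ℝ I, f z = z := by
  let p : ℕ → (I → ℕ) → I → ℝ := fun N t i => (t i : ℝ) / ((N : ℝ) + 1)
  have hpos : ∀ N : ℕ, (0 : ℝ) < (N : ℝ) + 1 := fun N => by positivity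
  have hp : ∀ N t, ∑ i, t i = N + 1 → p N t ∈ stdSimplex ℝ I := by
    intro N t ht
    refine ⟨fun i => by simp only [p]; positivity, ?_⟩
    simp only [p]
    rw [← sum_div, ← Nat.cast_sum, ht]
    push_cast
    exact div_self (hpos N).ne'
  have hcol : ∀ N t, ∃ i, ∑ i, t i = N + 1 → p N t i ≤ f (p N t) i := by
    intro N t
    by_cases ht : ∑ i, t i = N + 1
    · have h1 := hp N t ht
      have h2 := hm h1
      obtain ⟨i, -, hi⟩ := exists_le_of_sum_le (s := (univ : Finset I)) univ_nonempty
        (f := p N t) (g := f (p N t)) (by rw [h1.2, h2.2])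
      exact ⟨i, fun _ => hi⟩
    · exact ⟨Classical.arbitrary I, fun h => absurd h ht⟩
  choose c hc using hcol
  choose x hx1 hx2 hx3 using fun N : ℕ => grid (N + 1) (c N)
  let n : ℝ := Fintype.card I
  let X : I → ℕ → I → ℝ := fun i N => p N (x N i)
  have hX : ∀ i N, X i N ∈ stdSimplex ℝ I := fun i N => hp N _ (hx1 N i)
  have hXd : ∀ i j N l, X i N l ≤ X j N l + n / ((N : ℝ) + 1) := by
    intro i j N l
    simp only [X, p]
    rw [← add_div]
    apply div_le_div_of_nonneg_right _ (hpos N).le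
    simp only [n]
    exact_mod_cast hx2 N i j l
  have hXf : ∀ i N, X i N i ≤ f (X i N) i + n / ((N : ℝ) + 1) := by
    intro i N
    have hn : 0 ≤ n / ((N : ℝ) + 1) := by positivity
    rcases hx3 N i with h | h
    · have h1 := hc N (x N i) (hx1 N i)
      rw [h] at h1
      simp only [X]
      linarith
    · have h1 := (hm (hX i N)).1 i
      have : X i N i ≤ n / ((N : ℝ) + 1) := by
        simp only [X, p]
        apply div_le_div_of_nonneg_right _ (hpos N).le
        simp only [n]
        exact_mod_cast h
      linarith
  have hn0 : Tendsto (fun N : ℕ => n / ((N : ℝ) + 1)) atTop (𝓝 0) :=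
    by simpa [div_eq_mul_inv] using (tendsto_one_div_add_atTop_nhds_zero_nat (𝕜 := ℝ)).const_mul n
  let i0 := Classical.arbitrary I
  obtain ⟨z, hz, φ, hφ, hlim⟩ := (isCompact_stdSimplex ℝ I).tendsto_subseq (hX i0)
  have hn1 := hn0.comp hφ.tendsto_atTop
  have hlimi : ∀ i, Tendsto (X i ∘ φ) atTop (𝓝 z) := by
    intro i
    rw [tendsto_pi_nhds] at hlim ⊢
    intro l
    have hl := hlim l
    refine tendsto_of_tendsto_of_tendsto_of_le_of_le (by simpa using hl.sub hn1)
      (by simpa using hl.add hn1) ?_ ?_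
    · intro k
      have := hXd i0 i (φ k) l
      simp only [Function.comp_apply]
      linarith
    · intro k
      exact hXd i i0 (φ k) l
  have hle : ∀ i, z i ≤ f z i := by
    intro i
    have h1 : Tendsto (fun k => X i (φ k)) atTop (𝓝[stdSimplex ℝ I] z) :=
      tendsto_nhdsWithin_iff.2 ⟨hlimi i, Eventually.of_forall fun k => hX i _⟩
    have h2 := (hf z hz).tendsto.comp h1
    have h3 := (tendsto_pi_nhds.1 h2 i).add hn1
    rw [add_zero] at h3
    exact le_of_tendsto_of_tendsto' (tendsto_pi_nhds.1 (hlimi i) i) h3 fun k => hXf i (φ k)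
  refine ⟨z, hz, ?_⟩
  have := (sum_eq_sum_iff_of_le (s := (univ : Finset I)) fun i _ => hle i).1
    (by rw [hz.2, (hm hz).2])
  funext i
  exact (this i (mem_univ i)).symm

theorem schauder_approx {X : Type*} [NormedAddCommGroup X] [NormedSpace ℝ X]
    (B K : Set X) (hne : B.Nonempty) (hconv : Convex ℝ B) (hK : IsCompact K) (hKB : K ⊆ B)
    (T : X → X) (hT : ContinuousOn T B) (hTK : Set.MapsTo T B K) (ε : ℝ) (hε : 0 < ε) :
    ∃ x ∈ B, dist x (T x) ≤ ε := by
  obtain ⟨s, hsK, hsf, hcov⟩ := hK.finite_cover_balls hε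
  haveI : Fintype s := hsf.fintype
  haveI : Nonempty s := by
    obtain ⟨b, hb⟩ := hne
    obtain ⟨y, hy, -⟩ := Set.mem_iUnion₂.1 (hcov (hTK hb))
    exact ⟨⟨y, hy⟩⟩
  let w : s → X → ℝ := fun i y => max 0 (ε - dist y i)
  have hw0 : ∀ i y, 0 ≤ w i y := fun i y => le_max_left _ _
  have hwc : ∀ i, Continuous (w i) := fun i => by simp only [w]; fun_prop
  have hW : ∀ y ∈ K, 0 < ∑ i, w i y := by
    intro y hy
    obtain ⟨j, hj, hyj⟩ := Set.mem_iUnion₂.1 (hcov hy)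
    refine sum_pos' (fun i _ => hw0 i y) ⟨⟨j, hj⟩, mem_univ _, ?_⟩
    exact lt_max_of_lt_right (sub_pos.2 hyj)
  let q : (s → ℝ) → X := fun t => ∑ i, t i • (i : X)
  have hqc : Continuous q := by simp only [q]; fun_prop
  have hq : Set.MapsTo q (stdSimplex ℝ s) B := by
    intro t ht
    exact hconv.sum_mem (fun i _ => ht.1 i) ht.2 fun i _ => hKB (hsK i.2)
  have hTq : ContinuousOn (fun t => T (q t)) (stdSimplex ℝ s) := hT.comp hqc.continuousOn hq
  obtain ⟨t, ht, hfix⟩ := brouwer (fun t i => w i (T (q t)) / ∑ j, w j (T (q t)))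
    (by
      rw [continuousOn_pi]
      intro i
      refine ((hwc i).comp_continuousOn hTq).div
        (continuousOn_finsetSum _ fun j _ => (hwc j).comp_continuousOn hTq) ?_
      intro t ht
      exact (hW _ (hTK (hq ht))).ne')
    (by
      intro t ht
      have := hW _ (hTK (hq ht))
      refine ⟨fun i => div_nonneg (hw0 _ _) this.le, ?_⟩
      rw [← sum_div]
      exact div_self this.ne')
  refine ⟨q t, hq ht, ?_⟩
  have e : q t - T (q t) = ∑ i, t i • ((i : X) - T (q t)) := by
    simp only [smul_sub, sum_sub_distrib, ← sum_smul, ht.2, one_smul]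
    rfl
  rw [dist_eq_norm, e]
  calc ‖∑ i, t i • ((i : X) - T (q t))‖ ≤ ∑ i, t i * ε := by
        refine norm_sum_le_of_le _ fun i _ => ?_
        rw [norm_smul, Real.norm_of_nonneg (ht.1 i)]
        by_cases h : dist (T (q t)) i ≤ ε
        · apply mul_le_mul_of_nonneg_left _ (ht.1 i)
          rwa [← dist_eq_norm, dist_comm]
        · have h0 : w i (T (q t)) = 0 := max_eq_left (by linarith)
          have : t i = 0 := by
            rw [← congrFun hfix i]
            simp only [h0, zero_div]
          simp [this]
    _ = ε := by rw [← sum_mul, ht.2, one_mul]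

theorem schauder {X : Type*} [NormedAddCommGroup X] [NormedSpace ℝ X]
    (B K : Set X) (hne : B.Nonempty) (hconv : Convex ℝ B) (hK : IsCompact K) (hKB : K ⊆ B)
    (T : X → X) (hT : ContinuousOn T B) (hTK : Set.MapsTo T B K) :
    ∃ z ∈ B, T z = z := by
  choose x hxB hx using fun N : ℕ => schauder_approx B K hne hconv hK hKB T hT hTK
    (1 / ((N : ℝ) + 1)) (by positivity)
  obtain ⟨z, hz, φ, hφ, hlim⟩ := hK.tendsto_subseq fun N => hTK (hxB N)
  have h0 : Tendsto (fun k => dist (x (φ k)) (T (x (φ k)))) atTop (𝓝 0) :=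
    squeeze_zero (fun _ => dist_nonneg) (fun k => hx (φ k))
      (tendsto_one_div_add_atTop_nhds_zero_nat.comp hφ.tendsto_atTop)
  have hxl : Tendsto (fun k => x (φ k)) atTop (𝓝 z) := by
    refine hlim.congr_dist ?_
    simpa [dist_comm] using h0
  refine ⟨z, hKB hz, ?_⟩
  have h1 : Tendsto (fun k => x (φ k)) atTop (𝓝[B] z) :=
    tendsto_nhdsWithin_iff.2 ⟨hxl, Eventually.of_forall fun k => hxB _⟩
  exact tendsto_nhds_unique ((hT z (hKB hz)).tendsto.comp h1) hlim

end KrasAux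

open NNReal

theorem krasnoselskii {X : Type*} [NormedAddCommGroup X] [NormedSpace ℝ X]
    [CompleteSpace X]
    (B : Set X) (hne : B.Nonempty) (hcl : IsClosed B) (hconv : Convex ℝ B)
    (A B' : X → X) (k : ℝ≥0) (hk : (k : ℝ) < 1)
    (hA : LipschitzOnWith k A B)
    (hsum : ∀ u ∈ B, ∀ v ∈ B, A u + B' v ∈ B)
    (hcont : ContinuousOn B' B)
    (hcomp : IsCompact (closure (B' '' B))) :
    ∃ z ∈ B, z = A z + B' z := by
  have hsum' : ∀ u ∈ B, ∀ w ∈ closure (B' '' B), A u + w ∈ B := by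
    intro u hu w hw
    have hc : IsClosed {w | A u + w ∈ B} := hcl.preimage (by fun_prop)
    refine closure_minimal ?_ hc hw
    rintro _ ⟨v, hv, rfl⟩
    exact hsum u hu v hv
  have hS : ∀ w, ∃ s, w ∈ closure (B' '' B) → s ∈ B ∧ s = A s + w := by
    intro w
    by_cases hw : w ∈ closure (B' '' B)
    · have hmaps : Set.MapsTo (fun u => A u + w) B B := fun u hu => hsum' u hu w hw
      have hctr : ContractingWith k (hmaps.restrict (fun u => A u + w) B B) := by
        refine ⟨by exact_mod_cast hk, LipschitzWith.of_dist_le_mul fun u v => ?_⟩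
        have := hA.dist_le_mul u u.2 v v.2
        change dist (A u + w) (A v + w) ≤ k * dist (u : X) v
        rwa [dist_add_right]
      obtain ⟨x, hx⟩ := hne
      obtain ⟨y, hy, hfix, -⟩ := hctr.exists_fixedPoint' hcl.isComplete hmaps hx (edist_ne_top _ _)
      exact ⟨y, fun _ => ⟨hy, hfix.symm⟩⟩
    · exact ⟨0, fun h => absurd h hw⟩
  choose S hS using hS
  have hSlip : ∀ w ∈ closure (B' '' B), ∀ w' ∈ closure (B' '' B),
      dist (S w) (S w') ≤ (1 - (k : ℝ))⁻¹ * dist w w' := by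
    intro w hw w' hw'
    obtain ⟨h1, h2⟩ := hS w hw
    obtain ⟨h1', h2'⟩ := hS w' hw'
    have h3 : dist (S w) (S w') ≤ dist (A (S w)) (A (S w')) + dist w w' := by
      conv_lhs => rw [h2, h2']
      exact dist_add_add_le _ _ _ _
    have h4 := hA.dist_le_mul _ h1 _ h1'
    have h5 : 0 < 1 - (k : ℝ) := by linarith
    rw [← div_eq_inv_mul, le_div_iff₀ h5]
    linarith
  have hScont : ContinuousOn S (closure (B' '' B)) := by
    have h5 : 0 ≤ (1 - (k : ℝ))⁻¹ := inv_nonneg.2 (by linarith)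
    exact (LipschitzOnWith.of_dist_le_mul (K := ⟨_, h5⟩) hSlip).continuousOn
  have hB'm : Set.MapsTo B' B (closure (B' '' B)) := fun u hu => subset_closure ⟨u, hu, rfl⟩
  obtain ⟨z, hz, hfix⟩ := KrasAux.schauder B (S '' closure (B' '' B)) hne hconv
    (hcomp.image_of_continuousOn hScont) (by rintro _ ⟨w, hw, rfl⟩; exact (hS w hw).1)
    (fun u => S (B' u)) (hScont.comp hcont hB'm) (fun u hu => ⟨_, hB'm hu, rfl⟩)
  refine ⟨z, hz, ?_⟩
  have h := (hS _ (hB'm hz)).2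
  rw [hfix] at h
  exact h
end

section
/- Let 0 < α < 1. The function s ↦ E_{α,α}(-s) is nonincreasing on [0, ∞), and in particular E_{α,α}(-s) ≤ 1/Γ(α) for all s ≥ 0. -/
/-- The two-parameter Mittag-Leffler function `E_{α,α}(z) = Σ_{m≥0} z^m / Γ(αm+α)`. -/
noncomputable def mittagLeffler (α z : ℝ) : ℝ :=
  ∑' m : ℕ, z ^ m / Real.Gamma (α * m + α)

open MeasureTheory Set

lemma ml_beta (a b t : ℝ) (ha : 0 < a) (hb : 0 < b) (ht : 0 < t) :
    IntegrableOn (fun s : ℝ => s ^ (a - 1) * (t - s) ^ (b - 1)) (Ioo 0 t) ∧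
    ∫ s in Ioo 0 t, s ^ (a - 1) * (t - s) ^ (b - 1) =
      t ^ (a + b - 1) * (Real.Gamma a * Real.Gamma b / Real.Gamma (a + b)) := by
  have key : ∫ s in Ioo 0 t, s ^ (a - 1) * (t - s) ^ (b - 1) =
      t ^ (a + b - 1) * (Real.Gamma a * Real.Gamma b / Real.Gamma (a + b)) := by
    have h := Complex.betaIntegral_scaled (a : ℂ) (b : ℂ) ht
    rw [Complex.betaIntegral_eq_Gamma_mul_div _ _ (by simpa using ha) (by simpa using hb)] at h
    rw [intervalIntegral.integral_of_le ht.le, integral_Ioc_eq_integral_Ioo] at h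
    have h2 : ∫ s in Ioo 0 t, (s : ℂ) ^ ((a : ℂ) - 1) * ((t : ℂ) - s) ^ ((b : ℂ) - 1)
        = ∫ s in Ioo 0 t, ((s ^ (a - 1) * (t - s) ^ (b - 1) : ℝ) : ℂ) := by
      refine setIntegral_congr_fun measurableSet_Ioo fun s hs => ?_
      have h1 : 0 ≤ t - s := by linarith [hs.2]
      rw [Complex.ofReal_mul, Complex.ofReal_cpow hs.1.le, Complex.ofReal_cpow h1]
      push_cast
      rfl
    rw [h2, integral_complex_ofReal] at h
    apply Complex.ofReal_injective
    rw [h]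
    push_cast
    rw [Complex.ofReal_cpow ht.le, ← Complex.Gamma_ofReal, ← Complex.Gamma_ofReal,
      ← Complex.Gamma_ofReal]
    push_cast
    rfl
  refine ⟨?_, key⟩
  by_contra hn
  have h0 := integral_undef hn
  rw [h0] at key
  have := Real.Gamma_pos_of_pos ha
  have := Real.Gamma_pos_of_pos hb
  have := Real.Gamma_pos_of_pos (add_pos ha hb)
  have : 0 < t ^ (a + b - 1) * (Real.Gamma a * Real.Gamma b / Real.Gamma (a + b)) := by positivity
  linarith

lemma ml_gamma_lower (R x : ℝ) (hR : 0 < R) (hx : 0 < x) :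
    R ^ x * Real.exp (-R) ≤ Real.Gamma (x + 1) := by
  have hc := Real.GammaIntegral_convergent (s := x + 1) (by linarith)
  rw [Real.Gamma_eq_integral (by linarith)]
  calc R ^ x * Real.exp (-R) = ∫ u in Ioi R, R ^ x * Real.exp (-u) := by
        rw [integral_const_mul, integral_exp_neg_Ioi]
    _ ≤ ∫ u in Ioi R, Real.exp (-u) * u ^ (x + 1 - 1) := by
        refine setIntegral_mono_on ?_ (hc.mono_set (Ioi_subset_Ioi hR.le)) measurableSet_Ioi ?_
        · exact (integrableOn_exp_neg_Ioi R).const_mul _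
        · intro u hu
          rw [mul_comm, add_sub_cancel_right]
          have := Real.rpow_le_rpow hR.le (le_of_lt hu) hx.le
          gcongr
    _ ≤ _ := by
        refine setIntegral_mono_set hc ?_ (Ioi_subset_Ioi hR.le).eventuallyLE
        refine (ae_restrict_iff' measurableSet_Ioi).2 (Filter.Eventually.of_forall fun u hu => ?_)
        have : (0:ℝ) < u := hu
        simp only [Pi.zero_apply]
        positivity

lemma ml_gamma_bound (q : ℝ) (hq : 0 < q) :
    ∃ C : ℝ, 0 < C ∧ ∀ x : ℝ, 0 < x → 1 / Real.Gamma x ≤ C * q ^ x := by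
  refine ⟨Real.exp (Real.exp 1 / q), Real.exp_pos _, fun x hx => ?_⟩
  have hR : 0 < Real.exp 1 / q := by positivity
  have h := ml_gamma_lower _ x hR hx
  rw [Real.Gamma_add_one hx.ne', Real.div_rpow (Real.exp_pos _).le hq.le, Real.exp_neg,
    ← Real.exp_mul, one_mul] at h
  have hG := Real.Gamma_pos_of_pos hx
  have hxe : x ≤ Real.exp x := by linarith [Real.add_one_le_exp x]
  have hqx : 0 < q ^ x := by positivity
  have he := Real.exp_pos x
  set E := Real.exp (Real.exp 1 / q) with hE
  have hEp : 0 < E := Real.exp_pos _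
  rw [div_le_iff₀ hG]
  have h3 : Real.exp x / q ^ x * E⁻¹ ≤ Real.exp x * Real.Gamma x :=
    h.trans (by gcongr)
  have h4 : Real.exp x * (q ^ x)⁻¹ * E⁻¹ ≤ Real.exp x * Real.Gamma x := by
    simpa [div_eq_mul_inv] using h3
  rw [mul_assoc] at h4
  have h5 := le_of_mul_le_mul_left h4 he
  calc (1:ℝ) = E * q ^ x * ((q ^ x)⁻¹ * E⁻¹) := by field_simp
    _ ≤ _ := by gcongr

lemma ml_geom (α : ℝ) (hα : 0 < α) (z : ℝ) : ∃ C ρ : ℝ, 0 < C ∧ 0 < ρ ∧ ρ * |z| ≤ 1 / 2 ∧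
    ∀ m : ℕ, 1 / Real.Gamma (α * m + α) ≤ C * ρ ^ m := by
  set ρ : ℝ := 1 / (2 * (|z| + 1)) with hρ
  have hz := abs_nonneg z
  have hρp : 0 < ρ := by positivity
  obtain ⟨C, hC, h⟩ := ml_gamma_bound (ρ ^ (1 / α)) (by positivity)
  refine ⟨C * ρ, ρ, by positivity, hρp, ?_, fun m => ?_⟩
  · rw [hρ, div_mul_eq_mul_div, div_le_div_iff₀ (by positivity) (by norm_num)]
    linarith
  · refine (h _ (by positivity)).trans (le_of_eq ?_)
    rw [← Real.rpow_mul hρp.le, show 1 / α * (α * m + α) = ((m + 1 : ℕ) : ℝ) by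
      push_cast; field_simp, Real.rpow_natCast]
    ring

lemma ml_summable (α : ℝ) (hα : 0 < α) (z : ℝ) :
    Summable (fun m : ℕ => |z| ^ m / Real.Gamma (α * m + α)) := by
  obtain ⟨C, ρ, hC, hρ, hz, h⟩ := ml_geom α hα z
  have hg : Summable (fun m : ℕ => C * (ρ * |z|) ^ m) :=
    (summable_geometric_of_lt_one (by positivity) (by linarith)).mul_left C
  refine Summable.of_nonneg_of_le (fun m => ?_) (fun m => ?_) hg
  · have := Real.Gamma_pos_of_pos (show 0 < α * m + α by positivity)
    positivity
  · have := h m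
    calc _ = 1 / Real.Gamma (α * m + α) * |z| ^ m := by ring
      _ ≤ C * ρ ^ m * |z| ^ m := by gcongr
      _ = _ := by ring

lemma ml_hasSum (α : ℝ) (hα : 0 < α) (z : ℝ) :
    HasSum (fun m : ℕ => z ^ m / Real.Gamma (α * m + α)) (mittagLeffler α z) := by
  refine (Summable.of_norm ?_).hasSum
  refine (ml_summable α hα z).congr fun m => ?_
  have := Real.Gamma_pos_of_pos (show 0 < α * m + α by positivity)
  rw [norm_div, norm_pow, Real.norm_eq_abs, Real.norm_of_nonneg this.le]

lemma ml_continuous (α : ℝ) (hα : 0 < α) : Continuous (mittagLeffler α) := by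
  rw [continuous_iff_continuousAt]
  intro z
  have : ContinuousOn (mittagLeffler α) (Icc (-(|z| + 1)) (|z| + 1)) := by
    refine continuousOn_tsum (u := fun m : ℕ => |(|z| + 1)| ^ m / Real.Gamma (α * m + α))
      (fun m => by fun_prop) (ml_summable α hα _) (fun m x hx => ?_)
    have := Real.Gamma_pos_of_pos (show 0 < α * m + α by positivity)
    rw [norm_div, norm_pow, Real.norm_eq_abs, Real.norm_of_nonneg this.le]
    have h2 : |x| ≤ |(|z| + 1)| := (abs_le.2 hx).trans (le_abs_self _)
    gcongr
  refine this.continuousAt (Icc_mem_nhds ?_ ?_)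
  · linarith [neg_abs_le z]
  · linarith [le_abs_self z]

lemma ml_zero (α : ℝ) (hα : 0 < α) : mittagLeffler α 0 = 1 / Real.Gamma α := by
  have h := ml_hasSum α hα 0
  have h2 := hasSum_single (f := fun m : ℕ => (0:ℝ) ^ m / Real.Gamma (α * m + α)) 0
    (fun m hm => by simp [hm])
  rw [h.unique h2]
  simp

lemma ml_hasSum_congr {f g : ℕ → ℝ} {a : ℝ} (h : ∀ n, f n = g n) (hg : HasSum g a) :
    HasSum f a := by
  rwa [funext h]

lemma ml_conv (α : ℝ) (hα : 0 < α) (x y t : ℝ) (ht : 0 < t) :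
    (x - y) * ∫ s in Ioo 0 t, (s ^ (α - 1) * (t - s) ^ (α - 1)) *
      (mittagLeffler α (x * s ^ α) * mittagLeffler α (y * (t - s) ^ α)) =
    t ^ (α - 1) * (mittagLeffler α (x * t ^ α) - mittagLeffler α (y * t ^ α)) := by
  set F : ℕ × ℕ → ℝ → ℝ := fun p s => (s ^ (α - 1) * (t - s) ^ (α - 1)) *
    ((x * s ^ α) ^ p.1 / Real.Gamma (α * p.1 + α) *
      ((y * (t - s) ^ α) ^ p.2 / Real.Gamma (α * p.2 + α))) with hF
  have hGp : ∀ m : ℕ, 0 < Real.Gamma (α * m + α) := fun m =>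
    Real.Gamma_pos_of_pos (by positivity)
  have hFeq : ∀ p : ℕ × ℕ, ∀ s ∈ Ioo 0 t, F p s = (x ^ p.1 / Real.Gamma (α * p.1 + α) *
      (y ^ p.2 / Real.Gamma (α * p.2 + α))) *
      (s ^ ((α * p.1 + α) - 1) * (t - s) ^ ((α * p.2 + α) - 1)) := by
    intro p s hs
    have h1 : 0 < t - s := by linarith [hs.2]
    have h2 : ∀ u : ℝ, 0 < u → ∀ m : ℕ, u ^ ((α * m + α) - 1) = u ^ (α - 1) * (u ^ α) ^ m := by
      intro u hu m
      rw [← Real.rpow_natCast, ← Real.rpow_mul hu.le, ← Real.rpow_add hu]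
      congr 1; ring
    rw [h2 s hs.1, h2 _ h1, hF]
    simp only [mul_pow]
    ring
  have hFint : ∀ p, IntegrableOn (F p) (Ioo 0 t) := fun p =>
    IntegrableOn.congr_fun ((ml_beta (α * p.1 + α) (α * p.2 + α) t (by positivity)
      (by positivity) ht).1.const_mul _) (fun s hs => (hFeq p s hs).symm) measurableSet_Ioo
  set A : ℕ → ℝ := fun N => t ^ (α - 1) * ((t ^ α) ^ (N + 1) /
    Real.Gamma (α * ((N + 1 : ℕ) : ℝ) + α)) with hA
  have hbeta : ∀ m n : ℕ, ∫ s in Ioo 0 t, s ^ ((α * m + α) - 1) * (t - s) ^ ((α * n + α) - 1)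
      = A (m + n) * (Real.Gamma (α * m + α) * Real.Gamma (α * n + α)) := by
    intro m n
    rw [(ml_beta (α * m + α) (α * n + α) t (by positivity) (by positivity) ht).2, hA]
    simp only
    have e1 : α * (m:ℝ) + α + (α * n + α) = α * ((m + n + 1 : ℕ) : ℝ) + α := by push_cast; ring
    rw [e1, ← Real.rpow_natCast, ← Real.rpow_mul ht.le,
      show α * ((m + n + 1 : ℕ) : ℝ) + α - 1 = (α - 1) + α * ((m + n + 1 : ℕ) : ℝ) by ring,
      Real.rpow_add ht]
    ring
  have hFval : ∀ p : ℕ × ℕ, ∫ s in Ioo 0 t, F p s = x ^ p.1 * y ^ p.2 * A (p.1 + p.2) := by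
    intro p
    rw [setIntegral_congr_fun measurableSet_Ioo (hFeq p), integral_const_mul, hbeta]
    have := (hGp p.1).ne'
    have := (hGp p.2).ne'
    field_simp
  have hFnorm : ∀ p : ℕ × ℕ, ∫ s in Ioo 0 t, ‖F p s‖ = |x| ^ p.1 * |y| ^ p.2 * A (p.1 + p.2) := by
    intro p
    have : ∀ s ∈ Ioo 0 t, ‖F p s‖ = (|x| ^ p.1 / Real.Gamma (α * p.1 + α) *
      (|y| ^ p.2 / Real.Gamma (α * p.2 + α))) *
      (s ^ ((α * p.1 + α) - 1) * (t - s) ^ ((α * p.2 + α) - 1)) := by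
      intro s hs
      have h1 : 0 < t - s := by linarith [hs.2]
      have h0 := hs.1
      rw [hFeq p s hs, norm_mul, norm_mul, norm_div, norm_div, norm_pow, norm_pow,
        Real.norm_of_nonneg (hGp _).le, Real.norm_of_nonneg (hGp _).le,
        Real.norm_of_nonneg (by positivity : 0 ≤ (s ^ ((α * p.1 + α) - 1) *
        (t - s) ^ ((α * p.2 + α) - 1)))]
      rfl
    rw [setIntegral_congr_fun measurableSet_Ioo this, integral_const_mul, hbeta]
    have := (hGp p.1).ne'
    have := (hGp p.2).ne'
    field_simp
  have hsum : Summable (fun p : ℕ × ℕ => ∫ s in Ioo 0 t, ‖F p s‖) := by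
    simp_rw [hFnorm]
    obtain ⟨C, ρ, hC, hρ, hz, h⟩ := ml_geom α hα ((|x| + |y|) * t ^ α)
    have hta : 0 < t ^ α := by positivity
    rw [abs_mul, abs_of_pos hta, abs_of_nonneg (by positivity : 0 ≤ |x| + |y|)] at hz
    have hx : ρ * (|x| * t ^ α) ≤ 1 / 2 := by
      refine le_trans ?_ hz
      gcongr
      linarith [abs_nonneg y]
    have hy : ρ * (|y| * t ^ α) ≤ 1 / 2 := by
      refine le_trans ?_ hz
      gcongr
      linarith [abs_nonneg x]
    have hg : Summable (fun m : ℕ => (1 / 2 : ℝ) ^ m) :=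
      summable_geometric_of_lt_one (by norm_num) (by norm_num)
    have hgg := (hg.mul_of_nonneg hg (fun _ => by positivity) (fun _ => by positivity)).mul_left
      (t ^ (α - 1) * (t ^ α) * C * ρ)
    refine Summable.of_nonneg_of_le (fun p => ?_) (fun p => ?_) hgg
    · have := hGp (p.1 + p.2 + 1)
      simp only [hA]
      positivity
    · have := h (p.1 + p.2 + 1)
      calc |x| ^ p.1 * |y| ^ p.2 * A (p.1 + p.2)
          = |x| ^ p.1 * |y| ^ p.2 * (t ^ (α - 1) * (t ^ α) ^ (p.1 + p.2 + 1) *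
            (1 / Real.Gamma (α * ((p.1 + p.2 + 1 : ℕ) : ℝ) + α))) := by
            simp only [hA]; ring
        _ ≤ |x| ^ p.1 * |y| ^ p.2 * (t ^ (α - 1) * (t ^ α) ^ (p.1 + p.2 + 1) *
            (C * ρ ^ (p.1 + p.2 + 1))) := by gcongr
        _ = (t ^ (α - 1) * (t ^ α) * C * ρ) *
            ((ρ * (|x| * t ^ α)) ^ p.1 * (ρ * (|y| * t ^ α)) ^ p.2) := by ring
        _ ≤ _ := by gcongr
  have hHS := hasSum_integral_of_summable_integral_norm hFint hsum
  have htsum : ∀ s, ∑' p, F p s = (s ^ (α - 1) * (t - s) ^ (α - 1)) *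
      (mittagLeffler α (x * s ^ α) * mittagLeffler α (y * (t - s) ^ α)) := by
    intro s
    rw [hF]
    simp only
    rw [tsum_mul_left]
    congr 1
    have n1 : ∀ z : ℝ, Summable fun m : ℕ => ‖z ^ m / Real.Gamma (α * m + α)‖ := fun z =>
      (ml_hasSum α hα z).summable.norm
    exact (tsum_mul_tsum_of_summable_norm (n1 (x * s ^ α)) (n1 (y * (t - s) ^ α))).symm
  simp_rw [htsum, hFval] at hHS
  have h2 := (Finset.HasAntidiagonal.sigmaAntidiagonalEquivProd.hasSum_iff).2 (hHS.mul_left (x - y))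
  have h3 := h2.sigma (fun N => hasSum_fintype _)
  have h4 : ∀ z : ℝ, HasSum (fun m : ℕ => z ^ (m + 1) * A m)
      (t ^ (α - 1) * mittagLeffler α (z * t ^ α) - t ^ (α - 1) * (1 / Real.Gamma α)) := by
    intro z
    have := (hasSum_nat_add_iff' 1).2 ((ml_hasSum α hα (z * t ^ α)).mul_left (t ^ (α - 1)))
    simp only [Finset.sum_range_one, pow_zero, Nat.cast_zero, mul_zero, zero_add] at this
    refine ml_hasSum_congr (fun m => ?_) this
    simp only [hA, mul_pow]
    ring
  have h5 := (h4 x).sub (h4 y)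
  refine (h3.unique (ml_hasSum_congr (fun N => ?_) h5)).trans ?_
  · rw [Finset.univ_eq_attach]
    simp only [Function.comp, Finset.HasAntidiagonal.sigmaAntidiagonalEquivProd_apply]
    rw [Finset.sum_attach (Finset.HasAntidiagonal.antidiagonal N)
      (fun p => (x - y) * (x ^ p.1 * y ^ p.2 * A (p.1 + p.2))),
      Finset.Nat.sum_antidiagonal_eq_sum_range_succ
        (fun i j => (x - y) * (x ^ i * y ^ j * A (i + j)))]
    have := geom_sum₂_mul x y (N + 1)
    rw [← sub_mul, ← this, Finset.sum_mul, Finset.sum_mul]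
    refine Finset.sum_congr rfl fun i hi => ?_
    have hi' : i ≤ N := Nat.lt_succ_iff.1 (Finset.mem_range.1 hi)
    rw [Nat.add_sub_cancel' hi', Nat.add_sub_cancel]
    ring
  · ring

lemma ml_pos (α : ℝ) (hα : 0 < α) (hα1 : α < 1) (s : ℝ) (hs : 0 ≤ s) :
    0 < mittagLeffler α (-s) := by
  set f : ℝ → ℝ := fun t => mittagLeffler α (-(t ^ α)) with hf
  have hG := Real.Gamma_pos_of_pos hα
  have hfc : Continuous f := (ml_continuous α hα).comp
    ((Real.continuous_rpow_const hα.le).neg)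
  have hf0 : 0 < f 0 := by
    simp only [hf]
    rw [Real.zero_rpow hα.ne', neg_zero, ml_zero α hα]
    positivity
  suffices h : ∀ t : ℝ, 0 ≤ t → 0 < f t by
    have := h (s ^ (1 / α)) (by positivity)
    simp only [hf] at this
    rwa [← Real.rpow_mul hs, one_div_mul_cancel hα.ne', Real.rpow_one] at this
  by_contra hcon
  push Not at hcon
  obtain ⟨T, hT0, hT⟩ := hcon
  set S : Set ℝ := {t | 0 ≤ t ∧ f t ≤ 0} with hS
  have hSc : IsClosed S := (isClosed_le continuous_const continuous_id).inter
    (isClosed_le hfc continuous_const)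
  have hSb : BddBelow S := ⟨0, fun t ht => ht.1⟩
  have hmem : sInf S ∈ S := hSc.csInf_mem ⟨T, hT0, hT⟩ hSb
  set b := sInf S with hb
  have hb0 : 0 < b := by
    rcases hmem.1.lt_or_eq with h | h
    · exact h
    · have := hmem.2
      rw [← h] at this
      linarith
  have hlt : ∀ t, 0 ≤ t → t < b → 0 < f t := by
    intro t h0 h1
    by_contra h
    have : b ≤ t := csInf_le hSb ⟨h0, not_lt.1 h⟩
    linarith
  have hint : ∀ t, 0 < t →
      IntervalIntegrable (fun u : ℝ => u ^ (α - 1) * (t - u) ^ (α - 1) * f u) volume 0 t := by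
    intro t ht
    refine IntervalIntegrable.mul_continuousOn ?_ hfc.continuousOn
    rw [intervalIntegrable_iff_integrableOn_Ioo_of_le ht.le]
    exact (ml_beta α α t hα hα ht).1
  have hvol : ∀ t, 0 < t → ∫ u in (0:ℝ)..t, u ^ (α - 1) * (t - u) ^ (α - 1) * f u =
      t ^ (α - 1) * (1 - Real.Gamma α * f t) := by
    intro t ht
    have h := ml_conv α hα (-1) 0 t ht
    simp only [zero_mul, ml_zero α hα, neg_one_mul, sub_zero, ← mul_assoc] at h
    rw [integral_mul_const] at h
    rw [intervalIntegral.integral_of_le ht.le, integral_Ioc_eq_integral_Ioo]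
    have h' : (∫ u in Ioo 0 t, u ^ (α - 1) * (t - u) ^ (α - 1) * f u) * (1 / Real.Gamma α)
      = - (t ^ (α - 1) * (f t - 1 / Real.Gamma α)) := by rw [← h]; ring
    field_simp at h'
    linarith
  set c : ℝ := α * (b ^ (α - 1) * Real.Gamma α) / (2 * (b / 2) ^ (α - 1)) with hc
  have hcp : 0 < c := by positivity
  set δ : ℝ := min (b / 2) (c ^ (1 / α)) with hδ
  have hδp : 0 < δ := lt_min (by positivity) (by positivity)
  have hδb : δ ≤ b / 2 := min_le_left _ _
  have hδc : δ ^ α ≤ c := by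
    calc δ ^ α ≤ (c ^ (1 / α)) ^ α := Real.rpow_le_rpow hδp.le (min_le_right _ _) hα.le
      _ = c := by rw [← Real.rpow_mul hcp.le, one_div_mul_cancel hα.ne', Real.rpow_one]
  obtain ⟨t, ht, hmax⟩ := isCompact_Icc.exists_isMaxOn (nonempty_Icc.2 (by linarith : b - δ ≤ b))
    hfc.continuousOn
  have hft : 0 < f t := lt_of_lt_of_le (hlt (b - δ) (by linarith) (by linarith))
    (hmax (left_mem_Icc.2 (by linarith)))
  have htb : t < b := by
    rcases ht.2.lt_or_eq with h | h
    · exact h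
    · have := hmem.2
      rw [← h] at this
      linarith
  have ht2 : b / 2 ≤ t := by linarith [ht.1]
  have ht0 : 0 < t := by linarith
  have hi1 : IntervalIntegrable (fun u : ℝ => u ^ (α - 1) * (b - u) ^ (α - 1) * f u) volume 0 t :=
    (hint b hb0).mono_set (by
      rw [uIcc_of_le ht0.le, uIcc_of_le hb0.le]; exact Icc_subset_Icc_right htb.le)
  have hi2 : IntervalIntegrable (fun u : ℝ => u ^ (α - 1) * (b - u) ^ (α - 1) * f u) volume t b :=
    (hint b hb0).mono_set (by
      rw [uIcc_of_le htb.le, uIcc_of_le hb0.le]; exact Icc_subset_Icc_left ht0.le)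
  have hsplit := intervalIntegral.integral_add_adjacent_intervals hi1 hi2
  rw [hvol b hb0] at hsplit
  have hα' : α - 1 ≤ 0 := by linarith
  have hA : ∫ u in (0:ℝ)..t, u ^ (α - 1) * (b - u) ^ (α - 1) * f u ≤
      b ^ (α - 1) * (1 - Real.Gamma α * f t) := by
    calc _ ≤ ∫ u in (0:ℝ)..t, (b ^ (α - 1) / t ^ (α - 1)) *
          (u ^ (α - 1) * (t - u) ^ (α - 1) * f u) := by
          refine intervalIntegral.integral_mono_on_of_le_Ioo ht0.le hi1
            ((hint t ht0).const_mul _) fun u hu => ?_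
          have hu0 := hu.1
          have h1 : 0 < t - u := by linarith [hu.2]
          have h2 : 0 < b - u := by linarith [hu.2]
          have h3 := hlt u hu.1.le (by linarith [hu.2])
          have h4 : (b - u) ^ (α - 1) ≤ b ^ (α - 1) / t ^ (α - 1) * (t - u) ^ (α - 1) := by
            rw [div_mul_eq_mul_div, le_div_iff₀ (by positivity), ← Real.mul_rpow h2.le ht0.le,
              ← Real.mul_rpow hb0.le h1.le]
            refine Real.rpow_le_rpow_of_nonpos (by positivity) ?_ hα'
            nlinarith
          calc u ^ (α - 1) * (b - u) ^ (α - 1) * f u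
              ≤ u ^ (α - 1) * (b ^ (α - 1) / t ^ (α - 1) * (t - u) ^ (α - 1)) * f u := by gcongr
            _ = _ := by ring
      _ = _ := by
          rw [intervalIntegral.integral_const_mul, hvol t ht0]
          have : 0 < t ^ (α - 1) := by positivity
          field_simp
  have hB : ∫ u in t..b, u ^ (α - 1) * (b - u) ^ (α - 1) * f u ≤
      (b / 2) ^ (α - 1) * f t * ((b - t) ^ α / α) := by
    have hi3 : IntervalIntegrable (fun u : ℝ => (b - u) ^ (α - 1)) volume t b := by
      have := (intervalIntegral.intervalIntegrable_rpow' (a := b - t) (b := 0)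
        (r := α - 1) (by linarith)).comp_sub_left b
      simpa using this
    calc _ ≤ ∫ u in t..b, (b / 2) ^ (α - 1) * f t * (b - u) ^ (α - 1) := by
          refine intervalIntegral.integral_mono_on_of_le_Ioo htb.le hi2
            (hi3.const_mul _) fun u hu => ?_
          have hu0 : 0 < u := by linarith [hu.1]
          have h2 : 0 < b - u := by linarith [hu.2]
          have h3 := hlt u hu0.le hu.2
          have h4 : f u ≤ f t := hmax ⟨by linarith [hu.1, ht.1], hu.2.le⟩
          have h5 : u ^ (α - 1) ≤ (b / 2) ^ (α - 1) :=
            Real.rpow_le_rpow_of_nonpos (by positivity) (by linarith [hu.1]) hα'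
          calc u ^ (α - 1) * (b - u) ^ (α - 1) * f u
              ≤ (b / 2) ^ (α - 1) * (b - u) ^ (α - 1) * f t := by gcongr
            _ = _ := by ring
      _ = _ := by
          rw [intervalIntegral.integral_const_mul,
            intervalIntegral.integral_comp_sub_left (fun u => u ^ (α - 1)),
            integral_rpow (Or.inl (by linarith))]
          simp [Real.zero_rpow hα.ne']
  have hbt : (b - t) ^ α ≤ c :=
    (Real.rpow_le_rpow (by linarith) (by linarith [ht.1]) hα.le).trans hδc
  have hbp : 0 < b ^ (α - 1) := by positivity
  have hb2p : 0 < (b / 2) ^ (α - 1) := by positivity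
  have hB2 : (b / 2) ^ (α - 1) * f t * ((b - t) ^ α / α) ≤
      b ^ (α - 1) * Real.Gamma α * f t / 2 := by
    calc _ ≤ (b / 2) ^ (α - 1) * f t * (c / α) := by gcongr
      _ = _ := by
        rw [hc]; field_simp
  have hfb : 0 ≤ b ^ (α - 1) * (Real.Gamma α * (-f b)) := by
    have : 0 ≤ -f b := by linarith [hmem.2]
    positivity
  have hlast : 0 < b ^ (α - 1) * Real.Gamma α * f t := by positivity
  nlinarith

theorem mittagLeffler_neg_antitone (α : ℝ) (hα0 : 0 < α) (hα1 : α < 1) :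
    AntitoneOn (fun s : ℝ => mittagLeffler α (-s)) (Set.Ici (0 : ℝ)) ∧
      ∀ s : ℝ, 0 ≤ s → mittagLeffler α (-s) ≤ 1 / Real.Gamma α := by
  have hanti : AntitoneOn (fun s : ℝ => mittagLeffler α (-s)) (Set.Ici (0 : ℝ)) := by
    intro l hl m hm hlm
    have hl' : 0 ≤ l := hl
    have hm' : 0 ≤ m := hm
    have h := ml_conv α hα0 (-l) (-m) 1 one_pos
    simp only [Real.one_rpow, mul_one, one_mul] at h
    have hI : 0 ≤ ∫ s in Ioo (0:ℝ) 1, (s ^ (α - 1) * (1 - s) ^ (α - 1)) *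
      (mittagLeffler α (-l * s ^ α) * mittagLeffler α (-m * (1 - s) ^ α)) := by
      refine setIntegral_nonneg measurableSet_Ioo fun s hs => ?_
      have h0 := hs.1
      have h1 : 0 < 1 - s := by linarith [hs.2]
      have h2 := ml_pos α hα0 hα1 (l * s ^ α) (by positivity)
      have h3 := ml_pos α hα0 hα1 (m * (1 - s) ^ α) (by positivity)
      rw [neg_mul, neg_mul]
      positivity
    have h4 := mul_nonneg (by linarith : 0 ≤ -l - -m) hI
    simp only
    linarith
  refine ⟨hanti, fun s hs => ?_⟩
  have := hanti (show (0:ℝ) ∈ Set.Ici (0:ℝ) from Set.mem_Ici.2 le_rfl) hs hs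
  simpa [ml_zero α hα0] using this
end
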